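/- If R ∈ S²_B(⋀²ℝ⁴) is an algebraic curvature operator on ⋀²ℝ⁴ satisfying Q(R) = R² + R # R = 0, then R is the zero operator. -/

import Mathlib

open scoped BigOperators
open Matrix Filter

noncomputable section

/-- `so n`: the Lie algebra of real skew-symmetric `n × n` matrices, as a submodule of
matrices.  It is the model for `⋀²ℝⁿ` under the identification `x ∧ y ↦ x yᵀ - y xᵀ`,
i.e. `(x ∧ y)(z) = ⟨y,z⟩x - ⟨x,z⟩y`. -/
def so (n : ℕ) : Submodule ℝ (Matrix (Fin n) (Fin n) ℝ) where
  carrier := {A | Aᵀ = -A}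
  add_mem' := fun {a b} ha hb => by
    simp only [Set.mem_setOf_eq] at *
    rw [Matrix.transpose_add, ha, hb, neg_add]
  zero_mem' := by simp
  smul_mem' := fun c {a} ha => by
    simp only [Set.mem_setOf_eq] at *
    rw [Matrix.transpose_smul, ha, smul_neg]

lemma mem_so {n : ℕ} {A : Matrix (Fin n) (Fin n) ℝ} : A ∈ so n ↔ Aᵀ = -A := Iff.rfl

lemma so_skew {n : ℕ} (X : so n) : (X.1)ᵀ = -X.1 := mem_so.mp X.2

lemma so_skew' {n : ℕ} (X : so n) (i j : Fin n) : X.1 j i = -X.1 i j := by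
  have h := congrFun (congrFun (so_skew X) i) j
  simpa [Matrix.transpose_apply] using h

/-- The Lie bracket (matrix commutator) on `so n`. -/
def brkt {n : ℕ} (X Y : so n) : so n :=
  ⟨X.1 * Y.1 - Y.1 * X.1, by
    rw [mem_so, Matrix.transpose_sub, Matrix.transpose_mul, Matrix.transpose_mul,
      so_skew X, so_skew Y]
    simp [neg_sub]⟩

/-- The inner product `⟨A, B⟩ = -(1/2) tr (A B)` on `so n ≅ ⋀²ℝⁿ`, for which
`{e_i ∧ e_j : i < j}` is orthonormal. -/
def ip {n : ℕ} (X Y : so n) : ℝ := -(1 / 2) * (X.1 * Y.1).trace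

/-- `ip X` as a linear functional. -/
def ipL {n : ℕ} (X : so n) : so n →ₗ[ℝ] ℝ where
  toFun Y := ip X Y
  map_add' Y Z := by
    simp [ip, Matrix.mul_add, Matrix.trace_add]
    ring
  map_smul' c Y := by
    simp [ip, Matrix.mul_smul, Matrix.trace_smul]
    ring

/-- The wedge `x ∧ y` of two vectors, as an element of `so n`. -/
def wedgeVec {n : ℕ} (x y : Fin n → ℝ) : so n :=
  ⟨Matrix.of fun i j => x i * y j - y i * x j, by
    rw [mem_so]
    ext i j
    simp [Matrix.transpose_apply]
    ring⟩

/-- Index set for the standard orthonormal basis `{e_i ∧ e_j : i < j}` of `so n`. -/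
def pairs (n : ℕ) : Finset (Fin n × Fin n) := Finset.univ.filter (fun p => p.1 < p.2)

/-- Standard basis vector of `ℝⁿ`. -/
def stdVec {n : ℕ} (i : Fin n) : Fin n → ℝ := Pi.single i 1

/-- The standard orthonormal basis element `e_i ∧ e_j` of `so n`. -/
def omegaB {n : ℕ} (p : Fin n × Fin n) : so n := wedgeVec (stdVec p.1) (stdVec p.2)

/-- Hamilton's sharp product `A # B` of self-adjoint endomorphisms of `⋀²ℝⁿ ≅ so n`:
`⟨(A # B)(φ), ψ⟩ = (1/2) Σ_{α,β} ⟨[A ω_α, B ω_β], φ⟩ ⟨[ω_α, ω_β], ψ⟩`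
over the orthonormal basis `{ω_α} = {e_i ∧ e_j : i < j}`. -/
def sharp {n : ℕ} (A B : Module.End ℝ (so n)) : Module.End ℝ (so n) :=
  (1 / 2 : ℝ) • ∑ p ∈ pairs n, ∑ q ∈ pairs n,
    (ipL (brkt (A (omegaB p)) (B (omegaB q)))).smulRight (brkt (omegaB p) (omegaB q))

/-- The bilinear map `Q(A,B) = (1/2)(AB + BA) + A # B`. -/
def Qbil {n : ℕ} (A B : Module.End ℝ (so n)) : Module.End ℝ (so n) :=
  (1 / 2 : ℝ) • (A * B + B * A) + sharp A B

/-- `Q(R) = R² + R # R`. -/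
def Qop {n : ℕ} (R : Module.End ℝ (so n)) : Module.End ℝ (so n) := R * R + sharp R R

/-- Self-adjointness of an endomorphism of `so n ≅ ⋀²ℝⁿ`. -/
def IsSelfAdjointCO {n : ℕ} (R : Module.End ℝ (so n)) : Prop :=
  ∀ X Y : so n, ip (R X) Y = ip X (R Y)

/-- The first Bianchi identity. -/
def SatBianchi {n : ℕ} (R : Module.End ℝ (so n)) : Prop :=
  ∀ x y z w : Fin n → ℝ,
    ip (R (wedgeVec x y)) (wedgeVec z w) + ip (R (wedgeVec y z)) (wedgeVec x w)
      + ip (R (wedgeVec z x)) (wedgeVec y w) = 0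

/-- Algebraic curvature operators: self-adjoint endomorphisms of `⋀²ℝⁿ` satisfying the
first Bianchi identity.  `IsACO R` says `R ∈ S²_B(⋀²ℝⁿ)`. -/
def IsACO {n : ℕ} (R : Module.End ℝ (so n)) : Prop := IsSelfAdjointCO R ∧ SatBianchi R

/-- The Ricci tensor of `R`, `Ric(R)_{ij} = Σ_k ⟨R(e_i ∧ e_k), e_j ∧ e_k⟩`. -/
def RicM {n : ℕ} (R : Module.End ℝ (so n)) : Matrix (Fin n) (Fin n) ℝ :=
  Matrix.of fun i j => ∑ k, ip (R (wedgeVec (stdVec i) (stdVec k))) (wedgeVec (stdVec j) (stdVec k))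

/-- The scalar curvature `s(R) = tr Ric(R)`. -/
def scal {n : ℕ} (R : Module.End ℝ (so n)) : ℝ := (RicM R).trace

/-- `‖Ric(R)‖² = tr (Ric(R)²)`. -/
def ricNormSq {n : ℕ} (R : Module.End ℝ (so n)) : ℝ := (RicM R * RicM R).trace

/-- The traceless Ricci tensor `Ric₀(R)`. -/
def Ric0M {n : ℕ} (R : Module.End ℝ (so n)) : Matrix (Fin n) (Fin n) ℝ :=
  RicM R - (scal R / n) • (1 : Matrix (Fin n) (Fin n) ℝ)

/-- `R` is Einstein if `Ric(R)` is a scalar multiple of the identity of `ℝⁿ`. -/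
def IsEinstein {n : ℕ} (R : Module.End ℝ (so n)) : Prop :=
  ∃ c : ℝ, RicM R = c • (1 : Matrix (Fin n) (Fin n) ℝ)

lemma wedgeEnd_key {n : ℕ} (A B : Matrix (Fin n) (Fin n) ℝ) (M : so n) :
    (A * M.1 * Bᵀ + B * M.1 * Aᵀ)ᵀ = -(A * M.1 * Bᵀ + B * M.1 * Aᵀ) := by
  have hM := so_skew M
  rw [Matrix.transpose_add, Matrix.transpose_mul, Matrix.transpose_mul,
    Matrix.transpose_mul, Matrix.transpose_mul, Matrix.transpose_transpose,
    Matrix.transpose_transpose, hM]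
  simp only [Matrix.mul_neg, Matrix.neg_mul, Matrix.mul_assoc, neg_add]
  abel

/-- The wedge `A ∧ B` of two endomorphisms of `ℝⁿ`, as an endomorphism of `⋀²ℝⁿ ≅ so n`:
`(A ∧ B)(v ∧ w) = (1/2)(Av ∧ Bw + Bv ∧ Aw)`, i.e. `M ↦ (1/2)(A M Bᵀ + B M Aᵀ)`. -/
def wedgeEnd {n : ℕ} (A B : Matrix (Fin n) (Fin n) ℝ) : Module.End ℝ (so n) where
  toFun M := ⟨(1 / 2 : ℝ) • (A * M.1 * Bᵀ + B * M.1 * Aᵀ), by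
    rw [mem_so, Matrix.transpose_smul, wedgeEnd_key, smul_neg]⟩
  map_add' M N := by
    apply Subtype.ext
    simp [Matrix.mul_add, Matrix.add_mul, smul_add]
    abel
  map_smul' c M := by
    apply Subtype.ext
    simp [Matrix.mul_smul, Matrix.smul_mul, smul_smul, mul_comm]

/-- Inner product `⟨A, B⟩ = tr(A ∘ B)` on endomorphisms of `⋀²ℝⁿ` (the Frobenius inner
product for self-adjoint operators). -/
def endIP {n : ℕ} (A B : Module.End ℝ (so n)) : ℝ := LinearMap.trace ℝ ↥(so n) (A * B)

/-- Norm of an endomorphism of `⋀²ℝⁿ` induced by `endIP`. -/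
def endNorm {n : ℕ} (A : Module.End ℝ (so n)) : ℝ := Real.sqrt (endIP A A)

/-- Huisken's trilinear form `tri(A,B,C) = tr((AB + BA + 2 A#B) ∘ C) = 2⟨Q(A,B), C⟩`. -/
def tri {n : ℕ} (A B C : Module.End ℝ (so n)) : ℝ :=
  LinearMap.trace ℝ ↥(so n) ((A * B + B * A + (2 : ℝ) • sharp A B) * C)

/-- The identity component `R_I = (s(R)/(n(n-1))) id ∧ id` of a curvature operator. -/
def compI {n : ℕ} (R : Module.End ℝ (so n)) : Module.End ℝ (so n) :=
  (scal R / ((n : ℝ) * ((n : ℝ) - 1))) • 1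

/-- The traceless-Ricci component `R_{Ric₀} = (2/(n-2)) Ric₀(R) ∧ id`. -/
def compRic0 {n : ℕ} (R : Module.End ℝ (so n)) : Module.End ℝ (so n) :=
  (2 / ((n : ℝ) - 2)) • wedgeEnd (Ric0M R) 1

/-- The Weyl component `R_W = R - R_I - R_{Ric₀}`. -/
def compW {n : ℕ} (R : Module.End ℝ (so n)) : Module.End ℝ (so n) := R - compI R - compRic0 R

/-- The derivative `DQ̃(R)` of the normalized vector field
`Q̃(R) = Q(R) - ‖Ric R‖² R` at `R`, applied to `A`:
`DQ̃(R)(A) = 2Q(R,A) - ‖Ric R‖² A - 2 tr(Ric R · Ric A) R`. -/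
def DQt {n : ℕ} (R A : Module.End ℝ (so n)) : Module.End ℝ (so n) :=
  (2 : ℝ) • Qbil R A - ricNormSq R • A - (2 * (RicM R * RicM A).trace) • R


/-!
The splitting of `so(4)` into self-dual and anti-self-dual parts identifies it with `ℝ³ ⊕ ℝ³`, the
bracket being the cross product on each summand. Invariance of the inner product turns the sharp
product into a trace, `⟨(R # R)φ, ψ⟩ = -½ tr(ad ψ ∘ R ∘ ad φ ∘ R)`, and since
`A [u]ₓ Aᵀ = [cof(A) u]ₓ` for every `3 × 3` matrix `A`, it follows that `R # R` is twice the matrix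
of blockwise cofactors of `R`.

Write `R` in blocks as `(A B; Bᵀ C)`. The upper left block of `Q(R) = 0` is
`A² + B Bᵀ + 2 adj A = 0`, whose trace is `(tr A)² + |B|² = 0`; hence `B = 0` and `tr A = 0`.
Multiplying `A² = -2 adj A` by `A` gives `A³ = -2 det A · 1`, so `tr A³ = -6 det A`, whereas
`tr A³ = 3 det A` because `tr A = 0`. Therefore `A³ = 0`, and `A = 0` by symmetry. The lower right
block gives `C = 0` in the same way.
-/

section InnerProduct

variable {n : ℕ}

lemma so_apply_self (X : so n) (i : Fin n) : X.1 i i = 0 :=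
  self_eq_neg.mp (so_skew' X i i)

lemma ip_comm (X Y : so n) : ip X Y = ip Y X := by
  rw [ip, ip, Matrix.trace_mul_comm]

lemma brkt_skew (X Y : so n) : brkt X Y = -brkt Y X :=
  Subtype.ext (neg_sub _ _).symm

lemma ip_brkt_left (X Y Z : so n) : ip (brkt X Y) Z = ip X (brkt Y Z) := by
  have hcyc : (Y.1 * X.1 * Z.1).trace = (X.1 * Z.1 * Y.1).trace := by
    rw [Matrix.mul_assoc, Matrix.trace_mul_comm]
  simp only [ip, brkt, sub_mul, mul_sub, Matrix.trace_sub, hcyc, ← Matrix.mul_assoc]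

lemma ip_brkt_right (X Y Z : so n) : ip X (brkt Y Z) = -ip Z (brkt Y X) := by
  rw [← ip_brkt_left, ip_comm, brkt_skew]
  exact map_neg (ipL Z) _

lemma ip_omegaB {p : Fin n × Fin n} (X : so n) : ip (omegaB p) X = X.1 p.1 p.2 := by
  have hω : (omegaB p).1 = Matrix.single p.1 p.2 1 - Matrix.single p.2 p.1 1 := by
    ext i j
    simp only [omegaB, wedgeVec, stdVec, Matrix.of_apply, Matrix.sub_apply, Matrix.single_apply,
      Pi.single_apply]
    grind
  rw [ip, hω, sub_mul, Matrix.trace_sub, Matrix.trace_single_mul, Matrix.trace_single_mul,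
    so_skew' X p.1 p.2]
  simp only [smul_eq_mul]
  ring

lemma sum_ip_smul_omegaB (X : so n) : ∑ p ∈ pairs n, ip (omegaB p) X • omegaB p = X := by
  apply Subtype.ext
  ext i j
  have hterm (p : Fin n × Fin n) : (ip (omegaB p) X • omegaB p).1 i j =
      (if p = (i, j) then X.1 i j else 0) - (if p = (j, i) then X.1 j i else 0) := by
    rw [ip_omegaB]
    simp only [omegaB, wedgeVec, stdVec, Submodule.coe_smul, Matrix.smul_apply, Matrix.of_apply,
      Pi.single_apply, smul_eq_mul]
    grind
  rw [Submodule.coe_sum, Matrix.sum_apply]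
  simp only [hterm, Finset.sum_sub_distrib, Finset.sum_ite_eq', pairs, Finset.mem_filter,
    Finset.mem_univ, true_and]
  rcases lt_trichotomy i j with h | rfl | h
  · simp [h, h.not_gt]
  · simp [so_apply_self]
  · simp [h, h.not_gt, so_skew' X i j]

lemma sum_ip_omegaB_mul_ip_omegaB (X Y : so n) :
    ∑ p ∈ pairs n, ip (omegaB p) X * ip (omegaB p) Y = ip X Y := by
  conv_rhs => rw [← sum_ip_smul_omegaB Y]
  change _ = ipL X _
  simp only [map_sum, map_smul, smul_eq_mul]
  refine Finset.sum_congr rfl fun p _ => ?_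
  rw [mul_comm, ip_comm (omegaB p) X]
  rfl

lemma trace_eq_sum_ip_omegaB (T : Module.End ℝ (so n)) :
    LinearMap.trace ℝ (so n) T = ∑ p ∈ pairs n, ip (omegaB p) (T (omegaB p)) := by
  have hT : T = ∑ p ∈ pairs n, (ipL (omegaB p)).smulRight (T (omegaB p)) := by
    ext1 X
    conv_lhs => rw [← sum_ip_smul_omegaB X]
    simp only [map_sum, map_smul, LinearMap.sum_apply, LinearMap.smulRight_apply]
    rfl
  conv_lhs => rw [hT]
  simp only [map_sum, LinearMap.trace_smulRight]
  rfl

/-- The adjoint representation `ad X = [X, ·]` of `so n`. -/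
def adSo (X : so n) : Module.End ℝ (so n) where
  toFun := brkt X
  map_add' Y Z := Subtype.ext <| by
    simp only [brkt, Submodule.coe_add, mul_add, add_mul]
    abel
  map_smul' c Y := Subtype.ext <| by
    simp only [brkt, Submodule.coe_smul, Matrix.mul_smul, Matrix.smul_mul, smul_sub,
      RingHom.id_apply]

theorem ip_sharp (A : Module.End ℝ (so n)) {B : Module.End ℝ (so n)} (hB : IsSelfAdjointCO B)
    (X Y : so n) :
    ip Y (sharp A B X) =
      -(1 / 2) * LinearMap.trace ℝ (so n) (adSo Y * B * adSo X * A) := by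
  have hleft (p q : Fin n × Fin n) : ip (brkt (A (omegaB p)) (B (omegaB q))) X =
      ip (omegaB q) (B (brkt X (A (omegaB p)))) := by
    rw [ip_comm, ← ip_brkt_left, ip_comm, hB]
  have hright (p q : Fin n × Fin n) : ip Y (brkt (omegaB p) (omegaB q)) =
      ip (omegaB q) (brkt Y (omegaB p)) := by
    rw [← ip_brkt_left, ip_comm]
  have hpair (p : Fin n × Fin n) :
      ip (B (brkt X (A (omegaB p)))) (brkt Y (omegaB p)) =
        -ip (omegaB p) ((adSo Y * B * adSo X * A) (omegaB p)) :=
    ip_brkt_right _ _ _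
  calc ip Y (sharp A B X)
      = 1 / 2 * ∑ p ∈ pairs n, ∑ q ∈ pairs n,
          ip (brkt (A (omegaB p)) (B (omegaB q))) X * ip Y (brkt (omegaB p) (omegaB q)) := by
        change ipL Y _ = _
        simp only [sharp, LinearMap.smul_apply, LinearMap.sum_apply, LinearMap.smulRight_apply,
          map_smul, map_sum, smul_eq_mul]
        rfl
    _ = 1 / 2 * ∑ p ∈ pairs n, ip (B (brkt X (A (omegaB p)))) (brkt Y (omegaB p)) := by
        simp only [hleft, hright, sum_ip_omegaB_mul_ip_omegaB]
    _ = _ := by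
        simp only [hpair, Finset.sum_neg_distrib, trace_eq_sum_ip_omegaB]
        ring

end InnerProduct

lemma trace_fromBlocks {l m K : Type*} [Fintype l] [Fintype m] [AddCommMonoid K]
    (A : Matrix l l K) (B : Matrix l m K) (C : Matrix m l K) (D : Matrix m m K) :
    (Matrix.fromBlocks A B C D).trace = A.trace + D.trace := by
  simp only [Matrix.trace, Matrix.diag_apply, Fintype.sum_sum_type, Matrix.fromBlocks_apply₁₁,
    Matrix.fromBlocks_apply₂₂]

section CrossMatrix

variable {K : Type*} [CommRing K]

/-- The matrix of the cross product `u ⨯₃ ·`. -/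
def crossMatrix (u : Fin 3 → K) : Matrix (Fin 3) (Fin 3) K :=
  !![0, -u 2, u 1; u 2, 0, -u 0; -u 1, u 0, 0]

lemma crossMatrix_mulVec (u v : Fin 3 → K) : crossMatrix u *ᵥ v = u ⨯₃ v := by
  ext i
  fin_cases i <;>
    simp [crossMatrix, cross_apply, Matrix.mulVec, dotProduct, Fin.sum_univ_three] <;> ring

lemma trace_crossMatrix_mul_crossMatrix (u v : Fin 3 → K) :
    (crossMatrix u * crossMatrix v).trace = -2 * (u ⬝ᵥ v) := by
  simp only [crossMatrix, Matrix.trace_fin_three, Matrix.mul_apply, dotProduct,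
    Fin.sum_univ_three, Matrix.of_apply, Matrix.cons_val]
  ring

lemma mul_crossMatrix_mul_transpose (A : Matrix (Fin 3) (Fin 3) K) (u : Fin 3 → K) :
    A * crossMatrix u * Aᵀ = crossMatrix (A.adjugateᵀ *ᵥ u) := by
  ext i j
  fin_cases i <;> fin_cases j <;>
    simp [crossMatrix, Matrix.adjugate_fin_three, Matrix.mul_apply, Matrix.mulVec, dotProduct,
      Fin.sum_univ_three] <;> ring

lemma trace_crossMatrix_mul_conj (A : Matrix (Fin 3) (Fin 3) K) (u v : Fin 3 → K) :
    (crossMatrix u * A * crossMatrix v * Aᵀ).trace = -2 * (u ⬝ᵥ A.adjugateᵀ *ᵥ v) := by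
  rw [Matrix.mul_assoc (crossMatrix u), Matrix.mul_assoc (crossMatrix u),
    mul_crossMatrix_mul_transpose, trace_crossMatrix_mul_crossMatrix]

lemma trace_mul_self_add_two_mul_trace_adjugate (A : Matrix (Fin 3) (Fin 3) K) :
    (A * A).trace + 2 * A.adjugate.trace = A.trace ^ 2 := by
  simp only [Matrix.adjugate_fin_three, Matrix.trace_fin_three, Matrix.mul_apply,
    Fin.sum_univ_three, Matrix.of_apply, Matrix.cons_val]
  ring

lemma trace_mul_self_mul_self (A : Matrix (Fin 3) (Fin 3) K) :
    (A * A * A).trace = A.trace ^ 3 - 3 * A.trace * A.adjugate.trace + 3 * A.det := by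
  simp only [Matrix.adjugate_fin_three, Matrix.det_fin_three, Matrix.trace_fin_three,
    Matrix.mul_apply, Fin.sum_univ_three, Matrix.of_apply, Matrix.cons_val]
  ring

/-- The matrix of the bracket with `w` on `K³ ⊕ K³`, each summand carrying the cross product. -/
def blockCrossMatrix (w : Fin 3 ⊕ Fin 3 → K) : Matrix (Fin 3 ⊕ Fin 3) (Fin 3 ⊕ Fin 3) K :=
  Matrix.fromBlocks (crossMatrix (w ∘ Sum.inl)) 0 0 (crossMatrix (w ∘ Sum.inr))

/-- The matrix obtained from a `6 × 6` matrix by replacing each of its four `3 × 3` blocks by the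
cofactor matrix of that block. -/
def blockCofactor (M : Matrix (Fin 3 ⊕ Fin 3) (Fin 3 ⊕ Fin 3) K) :
    Matrix (Fin 3 ⊕ Fin 3) (Fin 3 ⊕ Fin 3) K :=
  Matrix.fromBlocks M.toBlocks₁₁.adjugateᵀ M.toBlocks₁₂.adjugateᵀ
    M.toBlocks₂₁.adjugateᵀ M.toBlocks₂₂.adjugateᵀ

lemma trace_blockCrossMatrix_mul_conj (M : Matrix (Fin 3 ⊕ Fin 3) (Fin 3 ⊕ Fin 3) K)
    (u v : Fin 3 ⊕ Fin 3 → K) :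
    (blockCrossMatrix u * M * blockCrossMatrix v * Mᵀ).trace =
      -2 * (u ⬝ᵥ blockCofactor M *ᵥ v) := by
  obtain ⟨A, B, C, D, rfl⟩ : ∃ A B C D, M = Matrix.fromBlocks A B C D :=
    ⟨_, _, _, _, (Matrix.fromBlocks_toBlocks M).symm⟩
  simp only [blockCrossMatrix, blockCofactor, Matrix.fromBlocks_transpose,
    Matrix.fromBlocks_multiply, trace_fromBlocks, Matrix.fromBlocks_mulVec,
    Matrix.toBlocks_fromBlocks₁₁, Matrix.toBlocks_fromBlocks₁₂, Matrix.toBlocks_fromBlocks₂₁,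
    Matrix.toBlocks_fromBlocks₂₂, zero_mul, mul_zero, add_zero, zero_add, Matrix.trace_add,
    trace_crossMatrix_mul_conj, dotProduct_block, Sum.elim_comp_inl, Sum.elim_comp_inr,
    dotProduct_add]
  ring

end CrossMatrix

lemma eq_zero_of_isHermitian_of_mul_self_mul_self_eq_zero {m K : Type*} [Fintype m]
    [NonUnitalRing K] [PartialOrder K] [StarRing K] [StarOrderedRing K] [NoZeroDivisors K]
    {A : Matrix m m K} (hA : A.IsHermitian) (h : A * A * A = 0) : A = 0 := by
  have hsq : A * A = 0 := by
    rw [← Matrix.mul_self_mul_conjTranspose_eq_zero, hA.eq, ← Matrix.mul_assoc, h]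
  rwa [← Matrix.self_mul_conjTranspose_eq_zero, hA.eq]

lemma eq_zero_of_trace_eq_zero_of_mul_self_add_adjugate_eq_zero
    {A : Matrix (Fin 3) (Fin 3) ℝ} (hA : A.IsSymm) (htr : A.trace = 0)
    (h : A * A + (2 : ℝ) • A.adjugate = 0) : A = 0 := by
  have hcube : A * A * A = (-2 * A.det) • 1 := by
    rw [eq_neg_of_add_eq_zero_left h, neg_mul, Matrix.smul_mul, Matrix.adjugate_mul, smul_smul,
      ← neg_smul, neg_mul]
  have hdet : A.det = 0 := by
    have := trace_mul_self_mul_self A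
    rw [hcube, htr, Matrix.trace_smul, Matrix.trace_one, Fintype.card_fin, smul_eq_mul] at this
    push_cast at this
    linarith
  have hherm : A.IsHermitian := (Matrix.conjTranspose_eq_transpose_of_trivial A).trans hA
  apply eq_zero_of_isHermitian_of_mul_self_mul_self_eq_zero hherm
  rw [hcube, hdet, mul_zero, zero_smul]

lemma eq_zero_of_mul_self_add_mul_transpose_add_adjugate_eq_zero {m : Type*} [Fintype m]
    {A : Matrix (Fin 3) (Fin 3) ℝ} {B : Matrix (Fin 3) m ℝ} (hA : A.IsSymm)
    (h : A * A + B * Bᵀ + (2 : ℝ) • A.adjugate = 0) : A = 0 ∧ B = 0 := by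
  have hnonneg : 0 ≤ (B * Bᵀ).trace := by
    simpa using (Matrix.posSemidef_self_mul_conjTranspose B).trace_nonneg
  have htrace : A.trace ^ 2 + (B * Bᵀ).trace = 0 := by
    have := congrArg Matrix.trace h
    simp only [Matrix.trace_add, Matrix.trace_smul, smul_eq_mul, Matrix.trace_zero] at this
    linarith [trace_mul_self_add_two_mul_trace_adjugate A]
  have hB : B = 0 := by
    rw [← Matrix.trace_mul_conjTranspose_self_eq_zero_iff,
      Matrix.conjTranspose_eq_transpose_of_trivial]
    linarith [sq_nonneg A.trace]
  subst hB
  have htrA : A.trace = 0 := by simpa using htrace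
  exact ⟨eq_zero_of_trace_eq_zero_of_mul_self_add_adjugate_eq_zero hA htrA (by simpa using h), rfl⟩

lemma eq_zero_of_mul_self_add_blockCofactor_eq_zero
    {M : Matrix (Fin 3 ⊕ Fin 3) (Fin 3 ⊕ Fin 3) ℝ} (hM : M.IsSymm)
    (h : M * M + (2 : ℝ) • blockCofactor M = 0) : M = 0 := by
  obtain ⟨A, B, B', C, rfl⟩ : ∃ A B B' C, M = Matrix.fromBlocks A B B' C :=
    ⟨_, _, _, _, (Matrix.fromBlocks_toBlocks M).symm⟩
  obtain ⟨hA, rfl, -, hC⟩ := Matrix.isSymm_fromBlocks_iff.mp hM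
  simp only [blockCofactor, Matrix.toBlocks_fromBlocks₁₁, Matrix.toBlocks_fromBlocks₂₂,
    Matrix.adjugate_transpose, hA.eq, hC.eq, Matrix.fromBlocks_multiply, Matrix.fromBlocks_smul,
    Matrix.fromBlocks_add] at h
  rw [← Matrix.fromBlocks_zero, Matrix.fromBlocks_inj] at h
  obtain ⟨h₁₁, -, -, h₂₂⟩ := h
  obtain ⟨rfl, rfl⟩ := eq_zero_of_mul_self_add_mul_transpose_add_adjugate_eq_zero hA h₁₁
  obtain ⟨rfl, -⟩ := eq_zero_of_mul_self_add_mul_transpose_add_adjugate_eq_zero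
    (B := (0 : Matrix (Fin 3) (Fin 3) ℝ)) hC (by simpa using h₂₂)
  rw [Matrix.transpose_zero, Matrix.fromBlocks_zero]

lemma so_four_eq (X : so 4) :
    X.1 = !![0, -X.1 1 0, -X.1 2 0, -X.1 3 0;
      X.1 1 0, 0, -X.1 2 1, X.1 1 3;
      X.1 2 0, X.1 2 1, 0, -X.1 3 2;
      X.1 3 0, -X.1 1 3, X.1 3 2, 0] := by
  ext i j
  fin_cases i <;> fin_cases j <;> first | exact so_apply_self X _ | exact so_skew' X _ _ | rfl

/-- The self-dual (`ε = 1`) and anti-self-dual (`ε = -1`) components of an element of `so 4`, read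
as vectors of `ℝ³` and scaled so that the bracket becomes the cross product. -/
def dualityPart (ε : ℝ) : so 4 →ₗ[ℝ] (Fin 3 → ℝ) where
  toFun X := ![X.1 3 2 + ε * X.1 1 0, X.1 1 3 + ε * X.1 2 0, X.1 2 1 + ε * X.1 3 0]
  map_add' X Y := by
    ext i
    fin_cases i <;> simp <;> ring
  map_smul' c X := by
    ext i
    fin_cases i <;> simp <;> ring

lemma dualityPart_brkt {ε : ℝ} (hε : ε * ε = 1) (X Y : so 4) :
    dualityPart ε (brkt X Y) = dualityPart ε X ⨯₃ dualityPart ε Y := by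
  simp only [dualityPart, brkt, LinearMap.coe_mk, AddHom.coe_mk]
  rw [so_four_eq X, so_four_eq Y]
  ext i
  fin_cases i <;> simp [cross_apply] <;> grind

/-- The element of `so 4` with self-dual part `u` and anti-self-dual part `v`. -/
def ofDualityParts (u v : Fin 3 → ℝ) : so 4 :=
  ⟨(1 / 2 : ℝ) • !![0, v 0 - u 0, v 1 - u 1, v 2 - u 2;
      u 0 - v 0, 0, -(u 2 + v 2), u 1 + v 1;
      u 1 - v 1, u 2 + v 2, 0, -(u 0 + v 0);
      u 2 - v 2, -(u 1 + v 1), u 0 + v 0, 0], by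
    rw [mem_so, Matrix.transpose_smul, ← smul_neg]
    congr 1
    ext i j
    fin_cases i <;> fin_cases j <;> simp⟩

lemma dualityPart_one_ofDualityParts (u v : Fin 3 → ℝ) :
    dualityPart 1 (ofDualityParts u v) = u := by
  ext i
  fin_cases i <;> simp [dualityPart, ofDualityParts] <;> ring

lemma dualityPart_neg_one_ofDualityParts (u v : Fin 3 → ℝ) :
    dualityPart (-1) (ofDualityParts u v) = v := by
  ext i
  fin_cases i <;> simp [dualityPart, ofDualityParts] <;> ring

lemma ofDualityParts_dualityPart (X : so 4) :
    ofDualityParts (dualityPart 1 X) (dualityPart (-1) X) = X := by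
  apply Subtype.ext
  rw [so_four_eq X]
  ext i j
  fin_cases i <;> fin_cases j <;> simp [dualityPart, ofDualityParts] <;> ring

/-- The splitting `so(4) ≅ so(3) ⊕ so(3)`, in coordinates. -/
def dualityEquiv : so 4 ≃ₗ[ℝ] (Fin 3 ⊕ Fin 3 → ℝ) where
  toFun X := Sum.elim (dualityPart 1 X) (dualityPart (-1) X)
  map_add' X Y := by
    simp only [map_add]
    ext (i | i) <;> rfl
  map_smul' c X := by
    simp only [map_smul]
    ext (i | i) <;> rfl
  invFun w := ofDualityParts (w ∘ Sum.inl) (w ∘ Sum.inr)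
  left_inv X := ofDualityParts_dualityPart X
  right_inv w := by
    ext (i | i)
    · exact congrFun (dualityPart_one_ofDualityParts (w ∘ Sum.inl) (w ∘ Sum.inr)) i
    · exact congrFun (dualityPart_neg_one_ofDualityParts (w ∘ Sum.inl) (w ∘ Sum.inr)) i

lemma dualityEquiv_brkt (X Y : so 4) :
    dualityEquiv (brkt X Y) =
      Sum.elim ((dualityEquiv X ∘ Sum.inl) ⨯₃ (dualityEquiv Y ∘ Sum.inl))
        ((dualityEquiv X ∘ Sum.inr) ⨯₃ (dualityEquiv Y ∘ Sum.inr)) :=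
  congrArg₂ Sum.elim (dualityPart_brkt (by norm_num) X Y) (dualityPart_brkt (by norm_num) X Y)

lemma two_mul_ip_eq_dotProduct_dualityEquiv (X Y : so 4) :
    2 * ip X Y = dualityEquiv X ⬝ᵥ dualityEquiv Y := by
  simp only [ip, dualityEquiv, dualityPart, LinearEquiv.coe_mk, LinearMap.coe_mk, AddHom.coe_mk]
  rw [so_four_eq X, so_four_eq Y]
  simp only [Matrix.trace, Matrix.diag_apply, Matrix.mul_apply, dotProduct, Fintype.sum_sum_type,
    Fin.sum_univ_four, Fin.sum_univ_three, Matrix.of_apply, Matrix.cons_val, Sum.elim_inl,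
    Sum.elim_inr]
  ring

/-- The basis of `so 4` adapted to the splitting into self-dual and anti-self-dual parts. -/
def dualityBasis : Module.Basis (Fin 3 ⊕ Fin 3) ℝ (so 4) := .ofEquivFun dualityEquiv

lemma dualityEquiv_dualityBasis (i : Fin 3 ⊕ Fin 3) :
    dualityEquiv (dualityBasis i) = Pi.single i 1 := by
  rw [dualityBasis, Module.Basis.coe_ofEquivFun, LinearEquiv.apply_symm_apply]

lemma toMatrix_dualityBasis_mulVec (T : Module.End ℝ (so 4)) (X : so 4) :
    LinearMap.toMatrix dualityBasis dualityBasis T *ᵥ dualityEquiv X = dualityEquiv (T X) :=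
  LinearMap.toMatrix_mulVec_repr dualityBasis dualityBasis T X

lemma toMatrix_dualityBasis_apply (T : Module.End ℝ (so 4)) (i j : Fin 3 ⊕ Fin 3) :
    LinearMap.toMatrix dualityBasis dualityBasis T i j =
      2 * ip (dualityBasis i) (T (dualityBasis j)) := by
  rw [two_mul_ip_eq_dotProduct_dualityEquiv, dualityEquiv_dualityBasis, single_one_dotProduct,
    LinearMap.toMatrix_apply]
  rfl

lemma isSymm_toMatrix_dualityBasis {R : Module.End ℝ (so 4)} (hR : IsSelfAdjointCO R) :
    (LinearMap.toMatrix dualityBasis dualityBasis R).IsSymm := by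
  ext i j
  rw [Matrix.transpose_apply, toMatrix_dualityBasis_apply, toMatrix_dualityBasis_apply, ← hR,
    ip_comm]

lemma toMatrix_dualityBasis_adSo (X : so 4) :
    LinearMap.toMatrix dualityBasis dualityBasis (adSo X) =
      blockCrossMatrix (dualityEquiv X) := by
  refine Matrix.ext_of_mulVec_single fun j => ?_
  rw [← dualityEquiv_dualityBasis, toMatrix_dualityBasis_mulVec, blockCrossMatrix,
    Matrix.fromBlocks_mulVec]
  simp only [Matrix.zero_mulVec, add_zero, zero_add, crossMatrix_mulVec]
  exact dualityEquiv_brkt X _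

theorem toMatrix_dualityBasis_sharp_self {R : Module.End ℝ (so 4)} (hR : IsSelfAdjointCO R) :
    LinearMap.toMatrix dualityBasis dualityBasis (sharp R R) =
      (2 : ℝ) • blockCofactor (LinearMap.toMatrix dualityBasis dualityBasis R) := by
  set M := LinearMap.toMatrix dualityBasis dualityBasis R with hM
  have htrace (X Y : so 4) : LinearMap.trace ℝ (so 4) (adSo Y * R * adSo X * R) =
      -2 * (dualityEquiv Y ⬝ᵥ blockCofactor M *ᵥ dualityEquiv X) := by
    rw [LinearMap.trace_eq_matrix_trace ℝ dualityBasis, LinearMap.toMatrix_mul,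
      LinearMap.toMatrix_mul, LinearMap.toMatrix_mul, toMatrix_dualityBasis_adSo,
      toMatrix_dualityBasis_adSo, ← trace_blockCrossMatrix_mul_conj, ← hM,
      (isSymm_toMatrix_dualityBasis hR).eq]
  ext i j
  rw [toMatrix_dualityBasis_apply, ip_sharp R hR, htrace, dualityEquiv_dualityBasis,
    dualityEquiv_dualityBasis, single_one_dotProduct, Matrix.mulVec_single_one, Matrix.smul_apply,
    Matrix.col_apply, smul_eq_mul]
  ring

theorem stmt0_general (R : Module.End ℝ (so 4)) (hR : IsSelfAdjointCO R) (hQ : Qop R = 0) :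
    R = 0 := by
  set M := LinearMap.toMatrix dualityBasis dualityBasis R
  have hMQ : M * M + (2 : ℝ) • blockCofactor M = 0 := by
    rw [← toMatrix_dualityBasis_sharp_self hR, ← LinearMap.toMatrix_mul, ← map_add]
    exact (congrArg _ hQ).trans (map_zero _)
  have hM0 : M = 0 :=
    eq_zero_of_mul_self_add_blockCofactor_eq_zero (isSymm_toMatrix_dualityBasis hR) hMQ
  exact (LinearEquiv.map_eq_zero_iff _).mp hM0

/-- The only algebraic curvature operator `R ∈ S²_B(⋀²ℝ⁴)` with
`Q(R) = R² + R # R = 0` is the zero operator. -/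
theorem stmt0 (R : Module.End ℝ (so 4)) (hACO : IsACO R) (hQ : Qop R = 0) : R = 0 :=
  stmt0_general R hACO.1 hQ
end
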